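/- The n-step history-state value defined by the Bellman recursion equals the expected n-step discounted return over sampled trajectories: for all n, h, s, V n h s = Σ_τ trajPMF n (h,s) τ * Σ_{k < τ.length} γ^k * R (τ.get k).1 (τ.get k).2. (Consistency of the paper's recursive Bellman form, Eqs. 15–16, with the raw expected-return definition of v^π(h,s), Eq. 14.) -/

import Mathlib

/-! Splitting off the first step, the discounted return `G` satisfies
`G ((s, a) :: τ) = R s a + γ * G τ`. By the law of total expectation, applied to the draws of the
action, the successor state and the observation, the expected return therefore obeys the recursion
defining `V`. The sums may be exchanged because `n`-step trajectories have length `n`, and bounded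
rewards give a bounded return on lists of a fixed length. -/

section Expectation

variable {α β : Type*}

/-- The expectation of a real function under a `PMF`, as a sum over points. As for any `tsum`, its
value is `0` when the sum does not converge absolutely. -/
noncomputable def expectation (p : PMF α) (f : α → ℝ) : ℝ :=
  ∑' x, (p x).toReal * f x

theorem summable_pmf_toReal (p : PMF α) : Summable fun x => (p x).toReal :=
  ENNReal.summable_toReal p.tsum_coe_ne_top

theorem tsum_pmf_toReal (p : PMF α) : ∑' x, (p x).toReal = 1 := by
  rw [← ENNReal.tsum_toReal_eq p.apply_ne_top, p.tsum_coe, ENNReal.toReal_one]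

theorem summable_pmf_toReal_mul_of_abs_le {p : PMF α} {f : α → ℝ} {C : ℝ}
    (hf : ∀ x ∈ p.support, |f x| ≤ C) : Summable fun x => (p x).toReal * f x := by
  refine .of_norm_bounded ((summable_pmf_toReal p).mul_right C) fun x => ?_
  rw [Real.norm_eq_abs, abs_mul, ENNReal.abs_toReal]
  by_cases hx : x ∈ p.support
  · exact mul_le_mul_of_nonneg_left (hf x hx) ENNReal.toReal_nonneg
  · simp [(p.apply_eq_zero_iff x).2 hx]

theorem expectation_pure (x : α) (f : α → ℝ) : expectation (PMF.pure x) f = f x := by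
  rw [expectation, tsum_eq_single x fun y hy => by simp [hy]]
  simp

theorem expectation_const_add_mul {p : PMF α} {f : α → ℝ}
    (hf : Summable fun x => (p x).toReal * f x) (b c : ℝ) :
    expectation p (fun x => b + c * f x) = b + c * expectation p f := by
  simp only [expectation, mul_add, mul_left_comm _ c]
  rw [((summable_pmf_toReal p).mul_right b).tsum_add (hf.mul_left c), tsum_mul_right, tsum_mul_left,
    tsum_pmf_toReal, one_mul]

theorem expectation_map_of_injective (p : PMF α) {g : α → β} (hg : g.Injective) (f : β → ℝ) :
    expectation (p.map g) f = expectation p (f ∘ g) := by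
  classical
  have hsupp : (Function.support fun y => (p.map g y).toReal * f y) ⊆ Set.range g := by
    intro y hy
    have hmem : y ∈ (p.map g).support := fun h => hy (by simp [h])
    rw [PMF.support_map] at hmem
    exact Set.image_subset_range g _ hmem
  rw [expectation, ← hg.tsum_eq hsupp]
  simp [expectation, PMF.map_apply, hg.eq_iff]

theorem hasSum_pmf_bind_toReal (p : PMF α) (q : α → PMF β) (y : β) :
    HasSum (fun x => (p x).toReal * (q x y).toReal) (p.bind q y).toReal := by
  have hfin : ∑' x, p x * q x y ≠ ⊤ := (p.bind q).apply_ne_top y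
  rw [PMF.bind_apply, ENNReal.tsum_toReal_eq (ENNReal.ne_top_of_tsum_ne_top hfin)]
  simpa only [ENNReal.toReal_mul] using ENNReal.hasSum_toReal hfin

theorem expectation_bind {p : PMF α} {q : α → PMF β} {f : β → ℝ}
    (hf : Summable fun y => (p.bind q y).toReal * f y) :
    expectation (p.bind q) f = expectation p fun x => expectation (q x) f := by
  have hsum : Summable fun z : β × α => (p z.2).toReal * (q z.2 z.1).toReal * f z.1 := by
    refine .of_abs ((summable_prod_of_nonneg fun _ => abs_nonneg _).2 ⟨fun y => ?_, ?_⟩)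
    · exact ((hasSum_pmf_bind_toReal p q y).summable.mul_right (f y)).abs
    · simpa only [abs_mul, ENNReal.abs_toReal, tsum_mul_right,
        (hasSum_pmf_bind_toReal p q _).tsum_eq] using hf.abs
  calc expectation (p.bind q) f
      = ∑' y, ∑' x, (p x).toReal * (q x y).toReal * f y := by
        simp only [expectation, tsum_mul_right, (hasSum_pmf_bind_toReal p q _).tsum_eq]
    _ = ∑' x, ∑' y, (p x).toReal * (q x y).toReal * f y := hsum.prod_symm.tsum_comm
    _ = expectation p fun x => expectation (q x) f := by
        simp only [expectation, mul_assoc, tsum_mul_left]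

end Expectation

section DiscountedReturn

variable {S A : Type*}

/-- The discounted return `∑ γ ^ k * R (s_k, a_k)` of a finite state-action trajectory. -/
def discountedReturn (R : S → A → ℝ) (γ : ℝ) (τ : List (S × A)) : ℝ :=
  ∑ k : Fin τ.length, γ ^ (k : ℕ) * R (τ.get k).1 (τ.get k).2

theorem discountedReturn_nil (R : S → A → ℝ) (γ : ℝ) : discountedReturn R γ [] = 0 :=
  Fin.sum_univ_zero _

theorem discountedReturn_cons (R : S → A → ℝ) (γ : ℝ) (s : S) (a : A) (τ : List (S × A)) :
    discountedReturn R γ ((s, a) :: τ) = R s a + γ * discountedReturn R γ τ := by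
  simp [discountedReturn, Fin.sum_univ_succ, Finset.mul_sum, pow_succ', mul_assoc]

theorem abs_discountedReturn_le {R : S → A → ℝ} {C : ℝ} (hR : ∀ s a, |R s a| ≤ C) (γ : ℝ)
    (τ : List (S × A)) :
    |discountedReturn R γ τ| ≤ ∑ k : Fin τ.length, |γ| ^ (k : ℕ) * C := by
  refine (Finset.abs_sum_le_sum_abs _ _).trans (Finset.sum_le_sum fun k _ => ?_)
  rw [abs_mul, abs_pow]
  exact mul_le_mul_of_nonneg_left (hR _ _) (by positivity)

theorem summable_pmf_toReal_mul_discountedReturn {R : S → A → ℝ}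
    (hR : BddAbove (Set.range fun x : S × A => |R x.1 x.2|)) (γ : ℝ) {p : PMF (List (S × A))}
    {n : ℕ} (hp : ∀ τ ∈ p.support, τ.length = n) :
    Summable fun τ => (p τ).toReal * discountedReturn R γ τ := by
  obtain ⟨C, hC⟩ := hR
  have hRC : ∀ s a, |R s a| ≤ C := fun s a => hC ⟨(s, a), rfl⟩
  refine summable_pmf_toReal_mul_of_abs_le (C := ∑ k : Fin n, |γ| ^ (k : ℕ) * C) fun τ hτ => ?_
  obtain rfl := hp τ hτ
  exact abs_discountedReturn_le hRC γ τ

end DiscountedReturn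

section Trajectory

variable {S A O α β : Type*} {T : S → A → PMF S} {Z : S → PMF O}

theorem forall_mem_support_bind {p : PMF α} {q : α → PMF β} {P : β → Prop}
    (hq : ∀ x, ∀ y ∈ (q x).support, P y) : ∀ y ∈ (p.bind q).support, P y := by
  intro y hy
  obtain ⟨x, -, hxy⟩ := (PMF.mem_support_bind_iff p q y).1 hy
  exact hq x y hxy

/-- The law of the future after playing `a` in state `s` with history `h`: draw the successor state
and the observation, then continue with the law `ν` attached to the new history-state pair. -/
noncomputable def continuationPMF (T : S → A → PMF S) (Z : S → PMF O)
    (ν : List (A × O) × S → PMF α) (h : List (A × O)) (s : S) (a : A) : PMF α :=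
  (T s a).bind fun s' => (Z s').bind fun o => ν (h ++ [(a, o)], s')

theorem map_continuationPMF (ν : List (A × O) × S → PMF α) (g : α → β) (h : List (A × O)) (s : S)
    (a : A) :
    (continuationPMF T Z ν h s a).map g =
      (T s a).bind fun s' => (Z s').bind fun o =>
        (ν (h ++ [(a, o)], s')).bind fun x => PMF.pure (g x) := by
  simp only [continuationPMF, PMF.map_bind]
  rfl

theorem forall_mem_support_continuationPMF {ν : List (A × O) × S → PMF α} {P : α → Prop}
    (hν : ∀ hs, ∀ x ∈ (ν hs).support, P x) (h : List (A × O)) (s : S) (a : A) :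
    ∀ x ∈ (continuationPMF T Z ν h s a).support, P x :=
  forall_mem_support_bind fun _ => forall_mem_support_bind fun _ => hν _

theorem length_of_mem_support_map_cons_continuationPMF {ν : List (A × O) × S → PMF (List α)}
    {n : ℕ} (hν : ∀ hs, ∀ τ ∈ (ν hs).support, τ.length = n) (x : α) (h : List (A × O)) (s : S)
    (a : A) : ∀ τ ∈ ((continuationPMF T Z ν h s a).map (x :: ·)).support, τ.length = n + 1 := by
  rw [PMF.support_map]
  rintro _ ⟨τ, hτ, rfl⟩
  exact congrArg (· + 1) (forall_mem_support_continuationPMF hν h s a τ hτ)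

theorem length_of_mem_support_trajectory {π : List (A × O) → PMF A}
    {trajPMF : ℕ → List (A × O) × S → PMF (List (S × A))}
    (hzero : ∀ hs, trajPMF 0 hs = PMF.pure [])
    (hsucc : ∀ n h s, trajPMF (n + 1) (h, s) =
      (π h).bind fun a => (continuationPMF T Z (trajPMF n) h s a).map ((s, a) :: ·))
    (n : ℕ) : ∀ hs, ∀ τ ∈ (trajPMF n hs).support, τ.length = n := by
  induction n with
  | zero => simp [hzero]
  | succ n ih =>
    rintro ⟨h, s⟩
    rw [hsucc]
    exact forall_mem_support_bind fun a =>
      length_of_mem_support_map_cons_continuationPMF ih (s, a) h s a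

theorem expectation_continuationPMF_discountedReturn {R : S → A → ℝ}
    (hR : BddAbove (Set.range fun x : S × A => |R x.1 x.2|)) (γ : ℝ)
    {ν : List (A × O) × S → PMF (List (S × A))} {n : ℕ}
    (hν : ∀ hs, ∀ τ ∈ (ν hs).support, τ.length = n) (h : List (A × O)) (s : S) (a : A) :
    expectation (continuationPMF T Z ν h s a) (discountedReturn R γ) =
      expectation (T s a) fun s' => expectation (Z s') fun o =>
        expectation (ν (h ++ [(a, o)], s')) (discountedReturn R γ) := by
  have hsum := summable_pmf_toReal_mul_discountedReturn hR γ
    (forall_mem_support_continuationPMF (T := T) (Z := Z) hν h s a)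
  refine (expectation_bind hsum).trans (congrArg _ (funext fun s' => ?_))
  exact expectation_bind
    (summable_pmf_toReal_mul_discountedReturn hR γ (forall_mem_support_bind fun _ => hν _))

theorem expectation_discountedReturn_bellman {R : S → A → ℝ}
    (hR : BddAbove (Set.range fun x : S × A => |R x.1 x.2|)) (γ : ℝ)
    {ν : List (A × O) × S → PMF (List (S × A))} {n : ℕ}
    (hν : ∀ hs, ∀ τ ∈ (ν hs).support, τ.length = n) (p : PMF A) (h : List (A × O)) (s : S) :
    expectation (p.bind fun a => (continuationPMF T Z ν h s a).map ((s, a) :: ·))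
        (discountedReturn R γ) =
      expectation p fun a => R s a + γ * expectation (T s a) fun s' => expectation (Z s') fun o =>
        expectation (ν (h ++ [(a, o)], s')) (discountedReturn R γ) := by
  have hsum := summable_pmf_toReal_mul_discountedReturn hR γ <| forall_mem_support_bind (p := p)
    fun a => length_of_mem_support_map_cons_continuationPMF (T := T) (Z := Z) hν (s, a) h s a
  refine (expectation_bind hsum).trans (congrArg _ (funext fun a => ?_))
  let μ := continuationPMF T Z ν h s a
  calc expectation (μ.map ((s, a) :: ·)) (discountedReturn R γ)
      = expectation μ fun τ => discountedReturn R γ ((s, a) :: τ) :=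
        expectation_map_of_injective _ List.cons_injective _
    _ = expectation μ fun τ => R s a + γ * discountedReturn R γ τ := by
        simp only [discountedReturn_cons]
    _ = R s a + γ * expectation μ (discountedReturn R γ) :=
        expectation_const_add_mul (summable_pmf_toReal_mul_discountedReturn hR γ
          (forall_mem_support_continuationPMF hν h s a)) _ _
    _ = R s a + γ * expectation (T s a) fun s' => expectation (Z s') fun o =>
          expectation (ν (h ++ [(a, o)], s')) (discountedReturn R γ) := by
        rw [expectation_continuationPMF_discountedReturn hR γ hν]

end Trajectory

theorem bellman_value_eq_expected_return_general
    {S A O : Type*} (T : S → A → PMF S) (Z : S → PMF O) (R : S → A → ℝ)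
    (hR : BddAbove (Set.range fun x : S × A => |R x.1 x.2|)) (γ : ℝ)
    (π : List (A × O) → PMF A)
    (V : ℕ → List (A × O) → S → ℝ)
    (hV0 : ∀ h s, V 0 h s = 0)
    (hV : ∀ n h s, V (n + 1) h s =
      ∑' a : A, (π h a).toReal *
        (R s a + γ * ∑' s' : S, (T s a s').toReal *
          ∑' o : O, (Z s' o).toReal * V n (h ++ [(a, o)]) s'))
    (trajPMF : ℕ → List (A × O) × S → PMF (List (S × A)))
    (hT0 : ∀ hs, trajPMF 0 hs = PMF.pure [])
    (hT : ∀ (n : ℕ) (h : List (A × O)) (s : S),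
      trajPMF (n + 1) (h, s) =
        (π h).bind fun a =>
          (T s a).bind fun s' =>
            (Z s').bind fun o =>
              (trajPMF n (h ++ [(a, o)], s')).bind fun rest =>
                PMF.pure ((s, a) :: rest)) :
    ∀ (n : ℕ) (h : List (A × O)) (s : S),
      V n h s =
        ∑' τ : List (S × A),
          (trajPMF n (h, s) τ).toReal *
            ∑ k : Fin τ.length,
              γ ^ (k : ℕ) * R (τ.get k).1 (τ.get k).2 := by
  change ∀ n h s, V n h s = expectation (trajPMF n (h, s)) (discountedReturn R γ)
  simp only [← map_continuationPMF] at hT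
  intro n
  induction n with
  | zero =>
    intro h s
    rw [hV0, hT0, expectation_pure, discountedReturn_nil]
  | succ n ih =>
    intro h s
    have hlength := length_of_mem_support_trajectory hT0 hT n
    rw [hV, hT, expectation_discountedReturn_bellman hR γ hlength]
    simp only [ih]
    rfl

/-- The n-step history-state value defined by the Bellman recursion equals
the expected n-step discounted return over sampled trajectories. -/
theorem bellman_value_eq_expected_return
    {S A O : Type*} [Fintype S] [Fintype A] [Fintype O]
    [Nonempty S] [Nonempty A] [Nonempty O]
    (T : S → A → PMF S) (Z : S → PMF O) (R : S → A → ℝ)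
    (γ : ℝ) (hγ0 : 0 ≤ γ) (hγ1 : γ < 1)
    (π : List (A × O) → PMF A)
    (V : ℕ → List (A × O) → S → ℝ)
    (hV0 : ∀ h s, V 0 h s = 0)
    (hV : ∀ n h s, V (n + 1) h s =
      ∑ a : A, (π h a).toReal *
        (R s a + γ * ∑ s' : S, (T s a s').toReal *
          ∑ o : O, (Z s' o).toReal * V n (h ++ [(a, o)]) s'))
    (trajPMF : ℕ → List (A × O) × S → PMF (List (S × A)))
    (hT0 : ∀ hs, trajPMF 0 hs = PMF.pure [])
    (hT : ∀ (n : ℕ) (h : List (A × O)) (s : S),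
      trajPMF (n + 1) (h, s) =
        (π h).bind fun a =>
          (T s a).bind fun s' =>
            (Z s').bind fun o =>
              (trajPMF n (h ++ [(a, o)], s')).bind fun rest =>
                PMF.pure ((s, a) :: rest)) :
    ∀ (n : ℕ) (h : List (A × O)) (s : S),
      V n h s =
        ∑' τ : List (S × A),
          (trajPMF n (h, s) τ).toReal *
            ∑ k : Fin τ.length,
              γ ^ (k : ℕ) * R (τ.get k).1 (τ.get k).2 :=
  bellman_value_eq_expected_return_general T Z R (Set.finite_range _).bddAbove γ π V hV0
    (by simpa only [tsum_fintype] using hV) trajPMF hT0 hT
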